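/- arXiv:2605.09565 — 3 statements merged into one kernel-verified Lean document; each statement's English description precedes it below -/
import Mathlib

section
/- Let ε be a real number with 0 < ε ≤ 1/8 and let k ≥ 11 be an integer. Set a = −2ε/(k−1) and c = −6ε/(k−2). Then ((1+a)/k) · ((k−1)·log(1+a) − log(1+4ε) − (k−2)·log(1+c)) ≤ 20ε²/k. -/
/-!
The factor `1 + a` lies in `[0, 1]`, so it suffices to bound the bracket by `20 ε²`. Each logarithm
is replaced by an elementary bound: `log (1 + a) ≤ a`, `log (1 + x) ≥ 2 x / (x + 2)` at `x = 4 ε`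
(`Real.le_log_one_add_of_nonneg`), and `log (1 + c) ≥ 1 - 1 / (1 + c)`. The first-order terms
`-2 ε - 4 ε + 6 ε` cancel. The second bound leaves an error of at most `8 ε²`. The third leaves
`36 ε² / (k - 2 - 6 ε) ≤ 12 ε²`.
-/

theorem stmt_0 (ε : ℝ) (k : ℤ) (hε0 : 0 < ε) (hε1 : ε ≤ 1/8) (hk : 11 ≤ k)
    (a c : ℝ) (ha : a = -2 * ε / ((k : ℝ) - 1)) (hc : c = -6 * ε / ((k : ℝ) - 2)) :
    (1 + a) / (k : ℝ) *
      (((k : ℝ) - 1) * Real.log (1 + a) - Real.log (1 + 4 * ε)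
        - ((k : ℝ) - 2) * Real.log (1 + c))
      ≤ 20 * ε ^ 2 / (k : ℝ) := by
  have hK : (11 : ℝ) ≤ k := by exact_mod_cast hk
  generalize (k : ℝ) = K at *
  have ha' : (K - 1) * a = -2 * ε := by
    rw [ha]; field_simp [show K - 1 ≠ 0 by linarith]
  have hc' : (K - 2) * c = -6 * ε := by
    rw [hc]; field_simp [show K - 2 ≠ 0 by linarith]
  have ha0 : a ≤ 0 := by nlinarith
  have ha1 : 0 < 1 + a := by nlinarith
  have hc1 : 0 < 1 + c := by nlinarith
  have h1 : (K - 1) * Real.log (1 + a) ≤ -2 * ε := by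
    have := Real.log_le_sub_one_of_pos ha1
    calc (K - 1) * Real.log (1 + a) ≤ (K - 1) * a :=
          mul_le_mul_of_nonneg_left (by linarith) (by linarith)
      _ = _ := ha'
  have h2 : 4 * ε - 8 * ε ^ 2 ≤ Real.log (1 + 4 * ε) := by
    refine le_trans ?_ (Real.le_log_one_add_of_nonneg (by linarith : 0 ≤ 4 * ε))
    rw [le_div_iff₀ (by linarith)]
    nlinarith [pow_pos hε0 3]
  have h3 : -6 * ε - 12 * ε ^ 2 ≤ (K - 2) * Real.log (1 + c) := by
    have h := Real.one_sub_inv_le_log_of_pos hc1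
    refine le_trans ?_ (mul_le_mul_of_nonneg_left h (by linarith : 0 ≤ K - 2))
    have e : (K - 2) * (1 - (1 + c)⁻¹) = -6 * ε * (K - 2) / (K - 2 - 6 * ε) := by
      have : K - 2 - 6 * ε = (K - 2) * (1 + c) := by linarith
      have hK2 : K - 2 ≠ 0 := by linarith
      rw [this, ← hc']
      field_simp
      ring
    rw [e, le_div_iff₀ (by linarith)]
    nlinarith [mul_nonneg (sq_nonneg ε) (by linarith : 0 ≤ K - 2 - 6 * ε - 3)]
  rw [div_mul_eq_mul_div]
  refine div_le_div_of_nonneg_right ?_ (by linarith)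
  calc _ ≤ (1 + a) * (20 * ε ^ 2) := mul_le_mul_of_nonneg_left (by linarith) ha1.le
    _ ≤ 20 * ε ^ 2 := by nlinarith [sq_nonneg ε]
end

section
/- Let m ≥ 1 be an integer, let n > 0, α > 0, ε ≥ 0 be real numbers with α ≥ 2ε, and for each t ∈ {1,…,m} let n_t, r_t, p_t, r̂_t be positive reals and y_t ∈ {0,1} such that p_t·n_t = r_t·n, |r̂_t − r_t| ≤ ε, r_t ≥ α, and p_t ≥ α. Then |(1/m)·Σ_{t=1}^m y_t·n_t/r̂_t − n| / n ≤ (1/m)·|Σ_{t=1}^m (y_t − p_t)·(1/p_t)·(r_t/r̂_t)| + 2ε/α. -/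
/-!
Since `nt t = rt t * n / pt t`, each summand satisfies
`y * nt / rhat = n * ((y - pt) * (1 / pt) * (rt / rhat) + 1 + (rt / rhat - 1))`.
After averaging and dividing by `n`, the relative error is the average of the centered terms plus
the average of the biases `rt / rhat - 1`. As `rhat ≥ α - ε ≥ α / 2`, each bias is at most
`ε / (α / 2) = 2 * ε / α` in absolute value.
-/


theorem stmt_13 (m : ℕ) (hm : 1 ≤ m) (n α ε : ℝ)
    (hn : 0 < n) (hα : 0 < α) (hε : 0 ≤ ε) (hαε : α ≥ 2 * ε)
    (nt rt pt rhat y : ℕ → ℝ)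
    (hpos : ∀ t ∈ Finset.Icc 1 m, 0 < nt t ∧ 0 < rt t ∧ 0 < pt t ∧ 0 < rhat t)
    (hy : ∀ t ∈ Finset.Icc 1 m, y t = 0 ∨ y t = 1)
    (hrel : ∀ t ∈ Finset.Icc 1 m, pt t * nt t = rt t * n)
    (herr : ∀ t ∈ Finset.Icc 1 m, |rhat t - rt t| ≤ ε)
    (hrα : ∀ t ∈ Finset.Icc 1 m, rt t ≥ α)
    (hpα : ∀ t ∈ Finset.Icc 1 m, pt t ≥ α) :
    |(1 / (m : ℝ)) * ∑ t ∈ Finset.Icc 1 m, y t * nt t / rhat t - n| / n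
      ≤ (1 / (m : ℝ)) * |∑ t ∈ Finset.Icc 1 m, (y t - pt t) * (1 / pt t) * (rt t / rhat t)|
        + 2 * ε / α := by
  have hm0 : (0 : ℝ) < m := by exact_mod_cast hm
  have hsum : ∑ t ∈ Finset.Icc 1 m, y t * nt t / rhat t
      = n * (∑ t ∈ Finset.Icc 1 m, (y t - pt t) * (1 / pt t) * (rt t / rhat t)
        + m + ∑ t ∈ Finset.Icc 1 m, (rt t / rhat t - 1)) := by
    have hcard : (m : ℝ) = ∑ t ∈ Finset.Icc 1 m, (1 : ℝ) := by simp
    rw [hcard, ← Finset.sum_add_distrib, ← Finset.sum_add_distrib, Finset.mul_sum]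
    refine Finset.sum_congr rfl fun t ht => ?_
    obtain ⟨-, -, hp, hr⟩ := hpos t ht
    have hnt : nt t = rt t * n / pt t := by
      rw [eq_div_iff hp.ne', mul_comm]
      exact hrel t ht
    rw [hnt]
    field_simp
    ring
  have hbias : |∑ t ∈ Finset.Icc 1 m, (rt t / rhat t - 1)| ≤ m * (2 * ε / α) := by
    calc |∑ t ∈ Finset.Icc 1 m, (rt t / rhat t - 1)|
        ≤ ∑ t ∈ Finset.Icc 1 m, |rt t / rhat t - 1| := Finset.abs_sum_le_sum_abs _ _
      _ ≤ ∑ t ∈ Finset.Icc 1 m, 2 * ε / α := by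
          refine Finset.sum_le_sum fun t ht => ?_
          obtain ⟨-, -, -, hr⟩ := hpos t ht
          have he := herr t ht
          have hlow : α / 2 ≤ rhat t := by
            linarith [(abs_le.mp he).1, hrα t ht]
          rw [div_sub_one hr.ne', abs_div, abs_of_pos hr, abs_sub_comm]
          calc |rhat t - rt t| / rhat t ≤ ε / (α / 2) := by gcongr
            _ = 2 * ε / α := by field_simp
      _ = m * (2 * ε / α) := by simp
  rw [hsum]
  generalize ∑ t ∈ Finset.Icc 1 m, (y t - pt t) * (1 / pt t) * (rt t / rhat t) = A
  generalize ∑ t ∈ Finset.Icc 1 m, (rt t / rhat t - 1) = C at hbias ⊢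
  have hsplit : (1 / (m : ℝ)) * (n * (A + m + C)) - n = n * ((1 / (m : ℝ)) * (A + C)) := by
    field_simp
    ring
  rw [hsplit, abs_mul, abs_of_pos hn, mul_div_cancel_left₀ _ hn.ne', abs_mul,
    abs_of_pos (by positivity : (0 : ℝ) < 1 / m)]
  calc (1 / (m : ℝ)) * |A + C| ≤ (1 / (m : ℝ)) * (|A| + m * (2 * ε / α)) := by
        gcongr
        exact (abs_add_le A C).trans (by gcongr)
    _ = (1 / (m : ℝ)) * |A| + 2 * ε / α := by field_simp
end

section
/- Let α > 0 and β > 0, let m, n > 0 and r, r̂, n̂, ε, η ≥ 0 be real numbers with r ≥ β, |r̂ − r| ≤ ε, |n̂ − n| ≤ η·n, and n̂ ≤ 2·n. Define p = r·n/m and p̂ = r̂·n̂/m, and assume p ≤ 1. Then |p̂ − p| ≤ (2/β)·ε + η. -/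
/-!
The error splits as `phat - p = (rhat - r) * (nhat / m) + (r / m) * (nhat - n)`. The first term is at
most `ε * (2 * n / m)`, and `n / m = p / r ≤ 1 / β`; the second is at most `η * (r * n / m) = η * p`,
hence at most `η`.
-/

theorem stmt_15 (α β m n r rhat nhat ε η : ℝ)
    (hα : 0 < α) (hβ : 0 < β) (hm : 0 < m) (hn : 0 < n)
    (hr : 0 ≤ r) (hrhat : 0 ≤ rhat) (hnhat : 0 ≤ nhat) (hε : 0 ≤ ε) (hη : 0 ≤ η)
    (hrβ : r ≥ β) (hrerr : |rhat - r| ≤ ε) (hnerr : |nhat - n| ≤ η * n) (hn2 : nhat ≤ 2 * n)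
    (p phat : ℝ) (hp : p = r * n / m) (hphat : phat = rhat * nhat / m)
    (hp1 : p ≤ 1) :
    |phat - p| ≤ (2 / β) * ε + η := by
  subst hp hphat
  have hrn : r * n ≤ m := (div_le_one hm).mp hp1
  -- `p ≤ 1` and `r ≥ β` bound the size ratio `n / m`, which controls the error coming from `rhat`.
  have hnm : n / m ≤ 1 / β := by
    rw [div_le_div_iff₀ hm hβ]
    nlinarith [mul_le_mul_of_nonneg_right hrβ hn.le]
  have hrecall : |(rhat - r) * (nhat / m)| ≤ (2 / β) * ε := by
    rw [abs_mul, abs_of_nonneg (div_nonneg hnhat hm.le)]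
    have hnhm : nhat / m ≤ 2 / β :=
      calc nhat / m ≤ 2 * n / m := by gcongr
        _ = 2 * (n / m) := by ring
        _ ≤ 2 * (1 / β) := by gcongr
        _ = 2 / β := by ring
    calc |rhat - r| * (nhat / m) ≤ ε * (2 / β) := by gcongr
      _ = (2 / β) * ε := by ring
  have hsize : |r / m * (nhat - n)| ≤ η := by
    rw [abs_mul, abs_of_nonneg (div_nonneg hr hm.le)]
    calc r / m * |nhat - n| ≤ r / m * (η * n) := by gcongr
      _ = η * (r * n / m) := by ring
      _ ≤ η * 1 := by gcongr
      _ = η := mul_one η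
  calc |rhat * nhat / m - r * n / m|
      = |(rhat - r) * (nhat / m) + r / m * (nhat - n)| := by congr 1; ring
    _ ≤ |(rhat - r) * (nhat / m)| + |r / m * (nhat - n)| := abs_add_le _ _
    _ ≤ (2 / β) * ε + η := add_le_add hrecall hsize
end
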